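/- Let A be the 7-gon in ℝ² given by the convex hull of the points (0, 2/5), (1,1), (−1,1), (2,2), (−2,2), (1,3), (−1,3). For any convex body B in ℝ², there exist an invertible affine map T : ℝ² → ℝ², a point c ∈ ℝ² and a real number λ with 1 ≤ λ ≤ 117/70 such that T(A) ⊆ B ⊆ c + λ • (T(A) − c). In particular, the Banach–Mazur radius of the family of planar convex bodies is at most 117/70 < 1.672. -/

import Mathlib

/-- A convex body in the plane: compact, convex, with nonempty interior. -/
def IsConvexBody (A : Set (ℝ × ℝ)) : Prop :=
  Convex ℝ A ∧ IsCompact A ∧ (interior A).Nonempty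

/-- The 7-gon with vertices (0, 2/5), (±1,1), (±2,2), (±1,3). -/
noncomputable def sevenGon : Set (ℝ × ℝ) :=
  convexHull ℝ {((0 : ℝ), (2/5 : ℝ)), (1, 1), (-1, 1), (2, 2), (-2, 2), (1, 3), (-1, 3)}

/-!
A balanced pair of horizontal chords of a convex body `B` consists of two chords of equal length `t`
such that there is a chord of length `2 * t` halfway between them, all with endpoints on the
boundary. Chord lengths and heights are recorded by the stretched Steiner symmetral `chordBody B`,
in which the heights and the length of a balanced pair exist and are unique, so that the hexagons
formed by the six endpoints make up a nonempty convex set. Over all directions in `[0, π]` they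
therefore make up a compact connected family. The defect of such a hexagon from being affine regular
changes sign when the direction is reversed, hence it vanishes somewhere: some affine regular
hexagon is inscribed in `B` (Besicovitch).

In coordinates adapted to that hexagon, a symmetry of it brings a point of `B` farthest in the
hexagonal norm, say of norm `s`, into the sector of the seventh vertex of the heptagon. A translate
of the heptagon scaled by `1 / D`, where `D = max 1 (17 / 10 - 2 / 5 * s)`, then fits into `B`,
while supporting lines of `B` at the hexagon vertices confine `B` to a homothetic copy of the
heptagon that is at most `5 / 3` times as large.
-/

open Set Metric
open scoped Pointwise

section BanachMazur

variable {E : Type*} [AddCommGroup E] [Module ℝ E] {A B : Set E} {r : ℝ}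

/-- Some affine image `A'` of `A` satisfies `A' ⊆ B ⊆ c + r (A' - c)` for some center `c`; in
particular the Banach–Mazur distance between `A` and `B` is then at most `r`. -/
def BanachMazurLE (A B : Set E) (r : ℝ) : Prop :=
  ∃ (T : E ≃ᵃ[ℝ] E) (c : E), T '' A ⊆ B ∧ B ⊆ AffineMap.homothety c r '' (T '' A)

lemma BanachMazurLE.image_left (Φ : E ≃ᵃ[ℝ] E) (h : BanachMazurLE A B r) :
    BanachMazurLE (Φ '' A) B r := by
  obtain ⟨T, c, hAB, hBA⟩ := h
  have himage : Φ.symm.trans T '' (Φ '' A) = T '' A := by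
    simp [image_image]
  exact ⟨Φ.symm.trans T, c, by rwa [himage], by rwa [himage]⟩

lemma BanachMazurLE.of_preimage_right (Φ : E ≃ᵃ[ℝ] E) (h : BanachMazurLE A (Φ ⁻¹' B) r) :
    BanachMazurLE A B r := by
  obtain ⟨T, c, hAB, hBA⟩ := h
  refine ⟨T.trans Φ, Φ c, ?_, fun x hx ↦ ?_⟩
  · rintro _ ⟨p, hp, rfl⟩
    exact hAB (mem_image_of_mem T hp)
  · obtain ⟨_, ⟨p, hp, rfl⟩, hpx⟩ := hBA (show Φ.symm x ∈ Φ ⁻¹' B by simpa using hx)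
    refine ⟨Φ (T p), ⟨p, hp, rfl⟩, ?_⟩
    rw [AffineMap.homothety_eq_lineMap] at hpx ⊢
    exact (Φ.apply_lineMap c (T p) r).symm.trans (Φ.symm_apply_eq.1 hpx.symm).symm

lemma BanachMazurLE.of_vadd_smul_subset {a b : E} {μ : ℝ} (hμ : μ ≠ 0) (hr : r ≠ 1)
    (hA : a +ᵥ μ • A ⊆ B) (hB : B ⊆ b +ᵥ (r * μ) • A) : BanachMazurLE A B r := by
  have hr' : 1 - r ≠ 0 := sub_ne_zero.2 hr.symm
  let T : E ≃ᵃ[ℝ] E :=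
    (LinearEquiv.smulOfNeZero ℝ E μ hμ).toAffineEquiv.trans (AffineEquiv.constVAdd ℝ E a)
  have hT (p : E) : T p = a + μ • p := rfl
  -- the fixed point of the homothety taking `a + μ A` to `b + r μ A`
  refine ⟨T, (1 - r)⁻¹ • (b - r • a), ?_, fun x hx ↦ ?_⟩
  · rintro _ ⟨p, hp, rfl⟩
    exact hA (vadd_mem_vadd_set (smul_mem_smul_set hp))
  · obtain ⟨_, ⟨p, hp, rfl⟩, rfl⟩ := hB hx
    refine ⟨T p, mem_image_of_mem T hp, ?_⟩
    rw [AffineMap.homothety_eq_lineMap, AffineMap.lineMap_apply_module, hT, smul_smul,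
      mul_inv_cancel₀ hr']
    simp only [vadd_eq_add]
    module

end BanachMazur

section Convexity

variable {E : Type*} [TopologicalSpace E] [AddCommGroup E] [Module ℝ E] [IsTopologicalAddGroup E]
  [ContinuousSMul ℝ E] {K : Set E}

lemma exists_support_of_add_notMem_interior {u w : E} (hK : Convex ℝ K)
    (h0 : (0 : E) ∈ interior K) (hu : u ∈ K) (hw : w ∈ K) (huw : u + w ∉ interior K) :
    ∃ f : StrongDual ℝ E, 0 ≤ f u ∧ 0 ≤ f w ∧ f u + f w = 1 ∧ ∀ z ∈ K, f z ≤ 1 := by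
  obtain ⟨f, hf⟩ := geometric_hahn_banach_open_point hK.interior isOpen_interior huw
  have hpos : 0 < f (u + w) := by simpa using hf 0 h0
  have hle : ∀ z ∈ K, f z ≤ f (u + w) := by
    intro z hz
    by_contra! hlt
    have hz_pos := hpos.trans hlt
    have hmem : (f (u + w) / f z) • z ∈ interior K := by
      have := hK.combo_interior_self_mem_interior h0 hz (a := 1 - f (u + w) / f z)
        (sub_pos.2 ((div_lt_one hz_pos).2 hlt)) (by positivity) (sub_add_cancel _ _)
      simpa using this
    have := hf _ hmem
    rw [map_smul, smul_eq_mul, div_mul_cancel₀ _ hz_pos.ne'] at this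
    exact this.false
  have hu' := hle u hu
  have hw' := hle w hw
  rw [map_add] at hu' hw' hle hpos
  refine ⟨(f u + f w)⁻¹ • f, ?_, ?_, ?_, fun z hz ↦ ?_⟩
  · exact mul_nonneg (inv_nonneg.2 hpos.le) (by simpa using hw')
  · exact mul_nonneg (inv_nonneg.2 hpos.le) (by simpa using hu')
  · simp only [smul_apply, smul_eq_mul]
    rw [← mul_add, inv_mul_cancel₀ hpos.ne']
  · have := hle z hz
    simp only [smul_apply, smul_eq_mul]
    rw [inv_mul_le_one₀ hpos]
    exact this

end Convexity

section Plane

variable {K : Set (ℝ × ℝ)}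

lemma strongDual_apply_prod (f : StrongDual ℝ (ℝ × ℝ)) (x y : ℝ) :
    f (x, y) = x * f (1, 0) + y * f (0, 1) := by
  rw [← smul_eq_mul, ← smul_eq_mul, ← map_smul, ← map_smul, ← map_add]
  simp

lemma mem_interior_of_chord (hK : Convex ℝ K) (hne : (interior K).Nonempty)
    {x y x₁ x₂ u v y₁ y₂ : ℝ} (h₁ : (x₁, y) ∈ K) (h₂ : (x₂, y) ∈ K) (hx₁ : x₁ < x) (hx₂ : x < x₂)
    (hu : (u, y₁) ∈ K) (hv : (v, y₂) ∈ K) (hy₁ : y₁ < y) (hy₂ : y < y₂) :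
    (x, y) ∈ interior K := by
  by_contra hmem
  obtain ⟨f, hf0, hf⟩ := geometric_hahn_banach_of_nonempty_interior_point hK hmem hne
  have hle {a b : ℝ} (hab : (a, b) ∈ K) : (a - x) * f (1, 0) + (b - y) * f (0, 1) ≤ 0 := by
    have := hf _ hab
    rw [strongDual_apply_prod f a, strongDual_apply_prod f x] at this
    linarith
  have hfst : f (1, 0) = 0 := by
    nlinarith [hle h₁, hle h₂]
  have hsnd : f (0, 1) = 0 := by
    have := hle hu
    have := hle hv
    rw [hfst] at *
    nlinarith
  exact hf0 (ContinuousLinearMap.ext fun z ↦ by simp [strongDual_apply_prod f z.1 z.2, hfst, hsnd])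

lemma smul_add_smul_mem_of_zero_mem {E : Type*} [AddCommGroup E] [Module ℝ E] {C : Set E}
    (hC : Convex ℝ C) (h0 : (0 : E) ∈ C) {u v : E} (hu : u ∈ C) (hv : v ∈ C) {a b : ℝ}
    (ha : 0 ≤ a) (hb : 0 ≤ b) (hab : a + b ≤ 1) : a • u + b • v ∈ C := by
  have := hC.sum_mem (t := Finset.univ) (w := ![1 - (a + b), a, b]) (z := ![0, u, v])
    (by simp [Fin.forall_fin_succ, ha, hb, hab]) (by simp [Fin.sum_univ_succ])
    (by simp [Fin.forall_fin_succ, h0, hu, hv])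
  simpa [Fin.sum_univ_succ] using this

end Plane

section PlaneMaps

/-- The linear automorphism `(x, y) ↦ x • u + y • v` of the plane. -/
noncomputable def planeLinearEquiv (u v : ℝ × ℝ) (h : u.1 * v.2 - u.2 * v.1 ≠ 0) :
    (ℝ × ℝ) ≃ₗ[ℝ] ℝ × ℝ :=
  LinearEquiv.ofInjectiveEndo
    ((LinearMap.toSpanSingleton ℝ _ u).coprod (LinearMap.toSpanSingleton ℝ _ v)) <| by
    refine (injective_iff_map_eq_zero _).2 fun z hz ↦ ?_
    obtain ⟨h₁, h₂⟩ := Prod.ext_iff.1 hz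
    simp only [LinearMap.coprod_apply, LinearMap.toSpanSingleton_apply, Prod.fst_add,
      Prod.snd_add, Prod.smul_fst, Prod.smul_snd, smul_eq_mul, Prod.fst_zero,
      Prod.snd_zero] at h₁ h₂
    ext
    · refine (mul_eq_zero_iff_right h).1 ?_
      linear_combination v.2 * h₁ - v.1 * h₂
    · refine (mul_eq_zero_iff_right h).1 ?_
      linear_combination u.1 * h₂ - u.2 * h₁

lemma planeLinearEquiv_apply (u v : ℝ × ℝ) (h : u.1 * v.2 - u.2 * v.1 ≠ 0) (z : ℝ × ℝ) :
    planeLinearEquiv u v h z = z.1 • u + z.2 • v := rfl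

lemma exists_affineEquiv_plane_apply (o u v : ℝ × ℝ) (h : u.1 * v.2 - u.2 * v.1 ≠ 0) :
    ∃ T : ℝ × ℝ ≃ᵃ[ℝ] ℝ × ℝ, ∀ z, T z = o + (z.1 • u + z.2 • v) :=
  ⟨(planeLinearEquiv u v h).toAffineEquiv.trans (AffineEquiv.constVAdd ℝ _ o), fun _ ↦ rfl⟩

end PlaneMaps

section ConvexBody

variable {B : Set (ℝ × ℝ)}

lemma IsConvexBody.preimage (hB : IsConvexBody B) (Φ : ℝ × ℝ ≃ᵃ[ℝ] ℝ × ℝ) :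
    IsConvexBody (Φ ⁻¹' B) := by
  obtain ⟨hconv, hcomp, hne⟩ := hB
  let e := Φ.toContinuousAffineEquiv.toHomeomorph
  refine ⟨hconv.affine_preimage Φ.toAffineMap, e.isCompact_preimage.2 hcomp, ?_⟩
  have := hne.preimage e.surjective
  rwa [e.preimage_interior] at this

lemma frontier_preimage_affineEquiv (Φ : ℝ × ℝ ≃ᵃ[ℝ] ℝ × ℝ) (B : Set (ℝ × ℝ)) :
    frontier (Φ ⁻¹' B) = Φ ⁻¹' frontier B :=
  (Φ.toContinuousAffineEquiv.toHomeomorph.preimage_frontier B).symm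

end ConvexBody

lemma exists_cross_subset_of_mem_interior {K : Set (ℝ × ℝ)} {x y : ℝ}
    (h : (x, y) ∈ interior K) : ∃ ε > 0,
      (x - ε, y) ∈ K ∧ (x + ε, y) ∈ K ∧ (x, y - ε) ∈ K ∧ (x, y + ε) ∈ K := by
  obtain ⟨r, hr, hball⟩ := nhds_basis_closedBall.mem_iff.1 (mem_interior_iff_mem_nhds.1 h)
  refine ⟨r, hr, hball ?_, hball ?_, hball ?_, hball ?_⟩ <;>
    simp [Prod.dist_eq, abs_of_pos hr, hr.le]

/-! ### Chord lengths and balanced pairs -/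

section ChordBody

variable {K : Set (ℝ × ℝ)}

/-- The pairs `(t, y)` such that `K` contains a directed horizontal chord of signed length `t` at
height `y`: the Steiner symmetral of `K` about the vertical axis, stretched horizontally by `2`. -/
def chordBody (K : Set (ℝ × ℝ)) : Set (ℝ × ℝ) :=
  {z | ∃ x, (x, z.2) ∈ K ∧ (x + z.1, z.2) ∈ K}

lemma neg_mem_chordBody {t y : ℝ} (h : (t, y) ∈ chordBody K) : (-t, y) ∈ chordBody K := by
  obtain ⟨x, hx, hxt⟩ := h
  exact ⟨x + t, hxt, by simpa using hx⟩

lemma zero_mem_chordBody {x y : ℝ} (h : (x, y) ∈ K) : (0, y) ∈ chordBody K :=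
  ⟨x, h, by simpa using h⟩

lemma sub_mem_chordBody {x₁ x₂ y : ℝ} (h₁ : (x₁, y) ∈ K) (h₂ : (x₂, y) ∈ K) :
    (x₂ - x₁, y) ∈ chordBody K :=
  ⟨x₁, h₁, by simpa using h₂⟩

lemma isConvexBody_chordBody (hK : IsConvexBody K) : IsConvexBody (chordBody K) := by
  obtain ⟨hconv, hcomp, ⟨x, y⟩, hxy⟩ := hK
  refine ⟨?_, ?_, (0, y), ?_⟩
  · rintro z ⟨x₁, h₁, h₁'⟩ w ⟨x₂, h₂, h₂'⟩ a b ha hb hab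
    refine ⟨a * x₁ + b * x₂, by simpa using hconv h₁ h₂ ha hb hab, ?_⟩
    convert hconv h₁' h₂' ha hb hab using 1
    ext <;> simp
    ring
  · have himage : chordBody K = (fun q : (ℝ × ℝ) × (ℝ × ℝ) ↦ (q.2.1 - q.1.1, q.1.2)) ''
        (K ×ˢ K ∩ {q | q.1.2 = q.2.2}) := by
      ext ⟨t, y⟩
      constructor
      · rintro ⟨x, h₁, h₂⟩
        exact ⟨((x, y), (x + t, y)), ⟨⟨h₁, h₂⟩, rfl⟩, by simp⟩
      · rintro ⟨⟨⟨x₁, y₁⟩, ⟨x₂, y₂⟩⟩, ⟨⟨h₁, h₂⟩, rfl : y₁ = y₂⟩, heq⟩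
        obtain ⟨rfl, rfl⟩ := Prod.mk.inj heq
        exact sub_mem_chordBody h₁ h₂
    rw [himage]
    exact ((hcomp.prod hcomp).inter_right (isClosed_eq (by fun_prop) (by fun_prop))).image
      (by fun_prop)
  · have hopen : IsOpen {z : ℝ × ℝ | (x, z.2) ∈ interior K ∧ (x + z.1, z.2) ∈ interior K} :=
      (isOpen_interior.preimage (by fun_prop)).inter (isOpen_interior.preimage (by fun_prop))
    refine interior_maximal (fun z hz ↦ ?_) hopen ⟨hxy, by simpa using hxy⟩
    exact ⟨x, interior_subset hz.1, interior_subset hz.2⟩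

lemma mem_interior_chordBody_iff (hK : IsConvexBody K) {x y t : ℝ} (ht : 0 < t)
    (h : (x, y) ∈ K) (h' : (x + t, y) ∈ K) :
    (t, y) ∈ interior (chordBody K) ↔ (x, y) ∈ interior K ∨ (x + t, y) ∈ interior K := by
  constructor
  · intro h_int
    obtain ⟨ε, hε, -, ⟨x', hx', hx'ε⟩, ⟨u, hu, -⟩, ⟨v, hv, -⟩⟩ :=
      exists_cross_subset_of_mem_interior h_int
    rcases lt_or_ge x' x with hlt | hle
    · exact .inl <| mem_interior_of_chord hK.1 hK.2.2 hx' h' hlt (by linarith) hu hv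
        (by simpa using hε) (by simpa using hε)
    · exact .inr <| mem_interior_of_chord hK.1 hK.2.2 h hx'ε (by linarith)
        (by simp only; linarith) hu hv (by simpa using hε) (by simpa using hε)
  · have hC := isConvexBody_chordBody hK
    -- an endpoint in the interior can be moved horizontally, and it gives points just above and
    -- just below height `y`
    rintro (h_int | h_int) <;>
      obtain ⟨ε, hε, hl, hr, hd, hu⟩ := exists_cross_subset_of_mem_interior h_int
    · exact mem_interior_of_chord hC.1 hC.2.2 (sub_mem_chordBody hr h') (sub_mem_chordBody hl h')
        (by linarith) (by linarith) (zero_mem_chordBody hd) (zero_mem_chordBody hu)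
        (by linarith) (by linarith)
    · exact mem_interior_of_chord hC.1 hC.2.2 (sub_mem_chordBody h hl) (sub_mem_chordBody h hr)
        (by linarith) (by linarith) (zero_mem_chordBody hd) (zero_mem_chordBody hu)
        (by linarith) (by linarith)

end ChordBody

/-- A planar convex body that is symmetric about the vertical axis. -/
structure IsSymmetricBody (C : Set (ℝ × ℝ)) : Prop where
  isConvexBody : IsConvexBody C
  neg_mem : ∀ t y : ℝ, (t, y) ∈ C → (-t, y) ∈ C

/-- The points of `C` at abscissa `t` with heights `a > b`, and the one at abscissa `2 * t` and
mean height, are boundary points of `C`. -/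
structure IsBalanced (C : Set (ℝ × ℝ)) (t a b : ℝ) : Prop where
  pos : 0 < t
  lt : b < a
  top_mem : (t, a) ∈ frontier C
  bot_mem : (t, b) ∈ frontier C
  mid_mem : (2 * t, (a + b) / 2) ∈ frontier C

section Balanced

variable {C : Set (ℝ × ℝ)} {t a b y l : ℝ}

/-- The reflection in the horizontal axis. -/
def verticalFlip : ℝ × ℝ ≃ᵃ[ℝ] ℝ × ℝ :=
  ((LinearEquiv.refl ℝ ℝ).prodCongr (LinearEquiv.neg ℝ)).toAffineEquiv

lemma mem_preimage_verticalFlip_iff {x : ℝ} :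
    (x, y) ∈ verticalFlip ⁻¹' C ↔ (x, -y) ∈ C := Iff.rfl

lemma IsSymmetricBody.flip (hC : IsSymmetricBody C) : IsSymmetricBody (verticalFlip ⁻¹' C) where
  isConvexBody := hC.isConvexBody.preimage _
  neg_mem _ _ h := hC.neg_mem _ _ h

lemma IsBalanced.flip (h : IsBalanced C t a b) : IsBalanced (verticalFlip ⁻¹' C) t (-b) (-a) := by
  refine ⟨h.pos, neg_lt_neg h.lt, ?_, ?_, ?_⟩ <;>
    rw [frontier_preimage_affineEquiv, mem_preimage_verticalFlip_iff]
  · rw [neg_neg]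
    exact h.bot_mem
  · rw [neg_neg]
    exact h.top_mem
  · convert h.mid_mem using 2
    ring

lemma exists_lt_and_mem_of_mem_of_mem (hC : Convex ℝ C) {x₁ y₁ x₂ y₂ : ℝ} (h₁ : (x₁, y₁) ∈ C)
    (h₂ : (x₂, y₂) ∈ C) (hy₁ : y₁ < y) (hy₂ : y < y₂) (hl₁ : l < x₁) (hl₂ : l ≤ x₂) :
    ∃ x, l < x ∧ (x, y) ∈ C := by
  have hpos : 0 < y₂ - y₁ := by linarith
  refine ⟨(y₂ - y) / (y₂ - y₁) * x₁ + (y - y₁) / (y₂ - y₁) * x₂, ?_, ?_⟩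
  · have h₁ : 0 < (y₂ - y) / (y₂ - y₁) * (x₁ - l) :=
      mul_pos (div_pos (by linarith) hpos) (by linarith)
    have h₂ : 0 ≤ (y - y₁) / (y₂ - y₁) * (x₂ - l) :=
      mul_nonneg (div_nonneg (by linarith) hpos.le) (by linarith)
    have hsum : (y₂ - y) / (y₂ - y₁) + (y - y₁) / (y₂ - y₁) = 1 := by
      field_simp
      ring
    linear_combination h₁ + h₂ - l * hsum
  · convert hC h₁ h₂ (a := (y₂ - y) / (y₂ - y₁)) (b := (y - y₁) / (y₂ - y₁))
      (div_nonneg (by linarith) hpos.le) (div_nonneg (by linarith) hpos.le)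
      (by field_simp; ring) using 1
    ext
    · simp
    · simp
      field_simp
      ring

lemma half_add_mem_of_mem (hC : Convex ℝ C) (ha : (t, a) ∈ C) (hb : (t, b) ∈ C)
    (hl : (l, y) ∈ C) (hby : b ≤ y) (hya : y ≤ a) : ((l + t) / 2, (a + b) / 2) ∈ C := by
  have hmem : (t, a + b - y) ∈ C := by
    have hconv : Convex ℝ {u | (t, u) ∈ C} :=
      hC.affine_preimage ((AffineMap.const ℝ ℝ t).prod (AffineMap.id ℝ ℝ))
    exact hconv.ordConnected.out hb ha ⟨by linarith, by linarith⟩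
  convert hC hl hmem (a := 1 / 2) (b := 1 / 2) (by norm_num) (by norm_num) (by norm_num) using 1
  ext <;> simp <;> ring

namespace IsBalanced

lemma le_top (hC : IsSymmetricBody C) (h : IsBalanced C t a b) (hmem : (l, y) ∈ C) (hl : t ≤ l) :
    y ≤ a := by
  have hclosed := hC.isConvexBody.2.1.isClosed
  have hlt := h.lt
  have htop := hclosed.frontier_subset h.top_mem
  have hbot := hclosed.frontier_subset h.bot_mem
  by_contra! hy
  obtain ⟨x, hx, hxC⟩ := exists_lt_and_mem_of_mem_of_mem hC.isConvexBody.1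
    (hclosed.frontier_subset h.mid_mem) hmem (y := a) (l := t) (by linarith) hy
    (by linarith [h.pos]) hl
  exact h.top_mem.2 <| mem_interior_of_chord hC.isConvexBody.1 hC.isConvexBody.2.2
    (hC.neg_mem _ _ htop) hxC (by linarith [h.pos]) hx hbot hmem hlt hy

lemma bot_le (hC : IsSymmetricBody C) (h : IsBalanced C t a b) (hmem : (l, y) ∈ C) (hl : t ≤ l) :
    b ≤ y :=
  neg_le_neg_iff.1 <| h.flip.le_top hC.flip (y := -y)
    (by rwa [mem_preimage_verticalFlip_iff, neg_neg]) hl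

lemma le_two_mul (hC : IsSymmetricBody C) (h : IsBalanced C t a b)
    (hmem : (l, (a + b) / 2) ∈ C) : l ≤ 2 * t := by
  have hclosed := hC.isConvexBody.2.1.isClosed
  have hlt := h.lt
  by_contra! hl
  exact h.mid_mem.2 <| mem_interior_of_chord hC.isConvexBody.1 hC.isConvexBody.2.2
    (hC.neg_mem _ _ hmem) hmem (by linarith [h.pos]) hl (hclosed.frontier_subset h.bot_mem)
    (hclosed.frontier_subset h.top_mem) (by linarith) (by linarith)

lemma le_three_mul (hC : IsSymmetricBody C) (h : IsBalanced C t a b) (hmem : (l, y) ∈ C) :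
    l ≤ 3 * t := by
  have hclosed := hC.isConvexBody.2.1.isClosed
  rcases le_total l t with hl | hl
  · linarith [h.pos]
  have := h.le_two_mul hC <| half_add_mem_of_mem hC.isConvexBody.1
    (hclosed.frontier_subset h.top_mem) (hclosed.frontier_subset h.bot_mem) hmem
    (h.bot_le hC hmem hl) (h.le_top hC hmem hl)
  linarith

lemma sub_le_two_mul (hC : IsSymmetricBody C) (h : IsBalanced C t a b) {y₁ y₂ : ℝ}
    (h₁ : (0, y₁) ∈ C) (h₂ : (0, y₂) ∈ C) : y₂ - y₁ ≤ 2 * (a - b) := by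
  have hmid : (2 * t, (a + b) / 2) ∈ C := hC.isConvexBody.2.1.isClosed.frontier_subset h.mid_mem
  have hmem {y : ℝ} (hy : (0, y) ∈ C) : (t, (y + (a + b) / 2) / 2) ∈ C := by
    convert hC.isConvexBody.1.midpoint_mem hy hmid using 1
    ext <;> simp [midpoint_eq_smul_add]
    ring
  linarith [h.bot_le hC (hmem h₁) le_rfl, h.le_top hC (hmem h₂) le_rfl]

-- The segment from `(2 * t', (a' + b') / 2)` to `(t, a)` would be too wide at height `(a + b) / 2`
-- or too high at abscissa `t'`.
lemma not_lt_of_mid_le {t' a' b' : ℝ} (hC : IsSymmetricBody C) (h : IsBalanced C t a b)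
    (h' : IsBalanced C t' a' b') (hmid : a' + b' ≤ a + b) : ¬t < t' := by
  intro htt'
  have hclosed := hC.isConvexBody.2.1.isClosed
  have hconv := hC.isConvexBody.1
  have htop := hclosed.frontier_subset h.top_mem
  have hmid' := hclosed.frontier_subset h'.mid_mem
  have ha : a' ≤ a := h.le_top hC (hclosed.frontier_subset h'.top_mem) htt'.le
  have hb : b ≤ b' := h.bot_le hC (hclosed.frontier_subset h'.bot_mem) htt'.le
  have hlt' := h'.lt
  have ht := h.pos
  have hd : 0 < a - (a' + b') / 2 := by linarith
  have hw : 0 < 2 * t' - t := by linarith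
  have hmem {κ : ℝ} (h₀ : 0 ≤ κ) (h₁ : κ ≤ 1) :
      (κ * t + (1 - κ) * (2 * t'), κ * a + (1 - κ) * ((a' + b') / 2)) ∈ C := by
    simpa using hconv htop hmid' h₀ (sub_nonneg.2 h₁) (by ring)
  have hwide : 2 * (a - (a' + b') / 2) * (t' - t)
      ≤ ((a + b) / 2 - (a' + b') / 2) * (2 * t' - t) := by
    obtain ⟨κ, hκ⟩ : ∃ κ, κ = ((a + b) / 2 - (a' + b') / 2) / (a - (a' + b') / 2) := ⟨_, rfl⟩
    have hκd := (eq_div_iff hd.ne').1 hκ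
    have hle := h.le_two_mul hC <| by
      convert hmem (κ := κ) (hκ ▸ div_nonneg (by linarith) hd.le)
        (hκ ▸ (div_le_one hd).2 (by linarith [h.lt])) using 2
      linear_combination -hκd
    linear_combination (a - (a' + b') / 2) * hle + (2 * t' - t) * hκd
  have hhigh : t' * (a - (a' + b') / 2) ≤ (2 * t' - t) * (a' - (a' + b') / 2) := by
    obtain ⟨κ, hκ⟩ : ∃ κ, κ = t' / (2 * t' - t) := ⟨_, rfl⟩
    have hκw := (eq_div_iff hw.ne').1 hκ
    have hle := h'.le_top hC (hmem (κ := κ) (hκ ▸ div_nonneg (by linarith) hw.le)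
      (hκ ▸ (div_le_one hw).2 (by linarith))) (by linear_combination hκw)
    linear_combination (2 * t' - t) * hle - (a - (a' + b') / 2) * hκw
  nlinarith

lemma unique {t' a' b' : ℝ} (hC : IsSymmetricBody C) (h : IsBalanced C t a b)
    (h' : IsBalanced C t' a' b') : t' = t ∧ a' = a ∧ b' = b := by
  have hnot_lt {t a b t' a' b' : ℝ} (h : IsBalanced C t a b) (h' : IsBalanced C t' a' b') :
      ¬t < t' := by
    rcases le_total (a' + b') (a + b) with hmid | hmid
    · exact not_lt_of_mid_le hC h h' hmid
    · exact not_lt_of_mid_le hC.flip h.flip h'.flip (by linarith)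
  obtain rfl : t' = t := le_antisymm (not_lt.1 (hnot_lt h h')) (not_lt.1 (hnot_lt h' h))
  have hsub := hC.isConvexBody.2.1.isClosed.frontier_subset
  exact ⟨rfl, le_antisymm (h.le_top hC (hsub h'.top_mem) le_rfl)
      (h'.le_top hC (hsub h.top_mem) le_rfl),
    le_antisymm (h'.bot_le hC (hsub h.bot_mem) le_rfl) (h.bot_le hC (hsub h'.bot_mem) le_rfl)⟩

end IsBalanced

end Balanced

section Connected

variable {X Y : Type*} [TopologicalSpace X] [TopologicalSpace Y] {S : Set X}

lemma exists_mem_frontier_of_isPreconnected {C : Set X} (hS : IsPreconnected S)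
    (hmem : (S ∩ C).Nonempty) (hout : (S \ C).Nonempty) : ∃ x ∈ S, x ∈ frontier C := by
  by_contra! h
  obtain ⟨x, hxS, hxC⟩ := hmem
  have hcover : S ⊆ interior C ∪ (closure C)ᶜ := fun z hz ↦ by
    by_contra! hz'
    exact h z hz ⟨by simpa using (not_or.1 hz').2, (not_or.1 hz').1⟩
  have hsub := hS.subset_left_of_subset_union isOpen_interior isClosed_closure.isOpen_compl
    (disjoint_compl_right.mono_left (interior_subset.trans subset_closure)) hcover
    ⟨x, hxS, (hcover hxS).resolve_right fun hx ↦ hx (subset_closure hxC)⟩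
  obtain ⟨z, hzS, hzC⟩ := hout
  exact hzC (interior_subset (hsub hzS))

lemma isPreconnected_of_isPreconnected_fibers [T2Space Y] {f : X → Y} (hS : IsCompact S)
    (hf : Continuous f) (himage : IsPreconnected (f '' S))
    (hfiber : ∀ y, IsPreconnected (S ∩ f ⁻¹' {y})) : IsPreconnected S := by
  refine isPreconnected_closed_iff.2 fun F F' hF hF' hcover hne hne' ↦ ?_
  have hclosed {F : Set X} (hF : IsClosed F) : IsClosed (f '' (S ∩ F)) :=
    ((hS.inter_right hF).image hf).isClosed
  have himage_ne {F : Set X} : (S ∩ F).Nonempty → (f '' S ∩ f '' (S ∩ F)).Nonempty :=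
    fun ⟨x, hx⟩ ↦ ⟨f x, mem_image_of_mem f hx.1, mem_image_of_mem f hx⟩
  obtain ⟨y, -, ⟨x, ⟨hx, hxF⟩, rfl⟩, x', ⟨hx', hxF'⟩, hxx'⟩ :=
    isPreconnected_closed_iff.1 himage _ _ (hclosed hF) (hclosed hF')
      (by rw [← image_union, ← inter_union_distrib_left, inter_eq_left.2 hcover])
      (himage_ne hne) (himage_ne hne')
  obtain ⟨z, ⟨hzS, -⟩, hz⟩ := isPreconnected_closed_iff.1 (hfiber (f x)) F F' hF hF'
    (inter_subset_left.trans hcover) ⟨x, ⟨hx, rfl⟩, hxF⟩ ⟨x', ⟨hx', hxx'⟩, hxF'⟩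
  exact ⟨z, hzS, hz⟩

end Connected

section UpperHeight

variable {C : Set (ℝ × ℝ)} {t y : ℝ}

/-- The height of the upper boundary of `C` over the abscissa `t`; it is meaningful only if `C` is
bounded and meets that vertical line. -/
noncomputable def upperHeight (C : Set (ℝ × ℝ)) (t : ℝ) : ℝ := sSup {y | (t, y) ∈ C}

lemma isGreatest_upperHeight (hC : IsCompact C) (h : (t, y) ∈ C) :
    IsGreatest {y | (t, y) ∈ C} (upperHeight C t) := by
  have hfiber : {y | (t, y) ∈ C} = Prod.snd '' (C ∩ Prod.fst ⁻¹' {t}) := by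
    ext y
    simp
  refine IsCompact.isGreatest_sSup ?_ ⟨y, h⟩
  rw [hfiber]
  exact (hC.inter_right (isClosed_singleton.preimage continuous_fst)).image continuous_snd

lemma le_upperHeight (hC : IsCompact C) (h : (t, y) ∈ C) : y ≤ upperHeight C t :=
  (isGreatest_upperHeight hC h).2 h

lemma concaveOn_upperHeight (hC : Convex ℝ C) (hcomp : IsCompact C) :
    ConcaveOn ℝ (Prod.fst '' C) (upperHeight C) := by
  refine ⟨hC.linear_image (LinearMap.fst ℝ ℝ ℝ), ?_⟩
  rintro _ ⟨⟨t₁, y₁⟩, h₁, rfl⟩ _ ⟨⟨t₂, y₂⟩, h₂, rfl⟩ a b ha hb hab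
  have hmem := hC (isGreatest_upperHeight hcomp h₁).1 (isGreatest_upperHeight hcomp h₂).1 ha hb hab
  exact le_upperHeight hcomp hmem

lemma upperHeight_mem_frontier (hC : IsCompact C) (h : (t, y) ∈ C) :
    (t, upperHeight C t) ∈ frontier C := by
  have hgreatest := isGreatest_upperHeight hC h
  refine ⟨subset_closure hgreatest.1, fun h_int ↦ ?_⟩
  obtain ⟨ε, hε, -, -, -, hup⟩ := exists_cross_subset_of_mem_interior h_int
  linarith [hgreatest.2 hup]

/-- The height of the lower boundary of `C` over the abscissa `t`; it is meaningful only if `C` is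
bounded and meets that vertical line. -/
noncomputable def lowerHeight (C : Set (ℝ × ℝ)) (t : ℝ) : ℝ := -upperHeight (verticalFlip ⁻¹' C) t

lemma lowerHeight_le (hC : IsConvexBody C) (h : (t, y) ∈ C) : lowerHeight C t ≤ y :=
  neg_le.1 <| le_upperHeight (hC.preimage verticalFlip).2.1 (by
    rwa [mem_preimage_verticalFlip_iff, neg_neg])

lemma lowerHeight_mem_frontier (hC : IsConvexBody C) (h : (t, y) ∈ C) :
    (t, lowerHeight C t) ∈ frontier C := by
  have := upperHeight_mem_frontier (y := -y) (hC.preimage verticalFlip).2.1 (by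
    rwa [mem_preimage_verticalFlip_iff, neg_neg])
  rwa [frontier_preimage_affineEquiv] at this

end UpperHeight

namespace IsSymmetricBody

variable {C : Set (ℝ × ℝ)}

lemma exists_isMaxOn_fst (hC : IsSymmetricBody C) :
    ∃ D v, 0 < D ∧ (D, v) ∈ C ∧ ∀ t y, (t, y) ∈ C → t ≤ D := by
  obtain ⟨-, hcomp, ⟨x, y⟩, hxy⟩ := hC.isConvexBody
  obtain ⟨⟨D, v⟩, hmem, hmax⟩ := hcomp.exists_isMaxOn ⟨_, interior_subset hxy⟩
    continuous_fst.continuousOn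
  obtain ⟨ε, hε, hl, hr, -⟩ := exists_cross_subset_of_mem_interior hxy
  have h₁ : x + ε ≤ D := hmax hr
  have h₂ : -(x - ε) ≤ D := hmax (hC.neg_mem _ _ hl)
  exact ⟨D, v, by linarith, hmem, fun t y h ↦ hmax h⟩

lemma exists_lt_mem_mem (hC : IsSymmetricBody C) {D v t : ℝ} (hD : (D, v) ∈ C) (ht : 0 ≤ t)
    (htD : t < D) : ∃ y₁ y₂, y₁ < y₂ ∧ (t, y₁) ∈ C ∧ (t, y₂) ∈ C := by
  obtain ⟨hconv, -, ⟨x, y⟩, hxy⟩ := hC.isConvexBody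
  obtain ⟨ε, hε, -, -, hd, hu⟩ := exists_cross_subset_of_mem_interior hxy
  have hpos : 0 < D := by linarith
  have hcombo {y : ℝ} (h : (x, y) ∈ C) : (t, (1 - t / D) * y + t / D * v) ∈ C := by
    have hzero : (0, y) ∈ C := by
      convert hconv.midpoint_mem h (hC.neg_mem _ _ h) using 1
      ext <;> simp [midpoint_eq_smul_add]
      ring
    convert hconv hzero hD (sub_nonneg.2 ((div_le_one hpos).2 htD.le)) (by positivity)
      (sub_add_cancel 1 (t / D)) using 1
    ext <;> simp [hpos.ne']
  refine ⟨_, _, ?_, hcombo hd, hcombo hu⟩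
  have := mul_pos (sub_pos.2 ((div_lt_one hpos).2 htD)) hε
  linarith

lemma mem_of_abs_le (hC : IsSymmetricBody C) {D v t : ℝ} (hD : (D, v) ∈ C) (ht : |t| ≤ D) :
    (t, v) ∈ C :=
  (hC.isConvexBody.1.affine_preimage
    ((AffineMap.id ℝ ℝ).prod (AffineMap.const ℝ ℝ v))).ordConnected.out
      (hC.neg_mem _ _ hD) hD (abs_le.1 ht)

lemma continuousOn_upperHeight (hC : IsSymmetricBody C) {D v : ℝ} (hD : (D, v) ∈ C) :
    ContinuousOn (upperHeight C) (Ioo (-D) D) := by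
  obtain ⟨hconv, hcomp, -⟩ := hC.isConvexBody
  refine (concaveOn_upperHeight hconv hcomp).continuousOn_interior.mono ?_
  refine interior_maximal (fun t ht ↦ ?_) isOpen_Ioo
  exact ⟨(t, v), hC.mem_of_abs_le hD (abs_le.2 ⟨ht.1.le, ht.2.le⟩), rfl⟩

lemma continuousOn_lowerHeight (hC : IsSymmetricBody C) {D v : ℝ} (hD : (D, v) ∈ C) :
    ContinuousOn (lowerHeight C) (Ioo (-D) D) :=
  (hC.flip.continuousOn_upperHeight (v := -v) (by
    rwa [mem_preimage_verticalFlip_iff, neg_neg])).neg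

-- As `t` grows, the point at abscissa `2 * t` and mean height of the fiber over `t` leaves `C`.
lemma exists_isBalanced (hC : IsSymmetricBody C) : ∃ t a b, IsBalanced C t a b := by
  obtain ⟨D, v, hpos, hD, hmax⟩ := hC.exists_isMaxOn_fst
  obtain ⟨hconv, hcomp, -⟩ := hC.isConvexBody
  have hmem {t : ℝ} (h₀ : 0 ≤ t) (h₁ : t ≤ D) : (t, v) ∈ C :=
    hC.mem_of_abs_le hD (by rwa [abs_of_nonneg h₀])
  have hsub : Icc (D / 3) (3 * D / 4) ⊆ Ioo (-D) D :=
    Icc_subset_Ioo (by linarith) (by linarith)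
  have hpath : ContinuousOn (fun t ↦ (2 * t, (upperHeight C t + lowerHeight C t) / 2))
      (Icc (D / 3) (3 * D / 4)) :=
    (continuousOn_const.mul continuousOn_id).prodMk <|
      (((hC.continuousOn_upperHeight hD).mono hsub).add
        ((hC.continuousOn_lowerHeight hD).mono hsub)).div_const 2
  have hstart : (2 * (D / 3), (upperHeight C (D / 3) + lowerHeight C (D / 3)) / 2) ∈ C := by
    have hv : (D / 3, v) ∈ C := hmem (by linarith) (by linarith)
    convert half_add_mem_of_mem hconv (isGreatest_upperHeight hcomp hv).1
      (hcomp.isClosed.frontier_subset (lowerHeight_mem_frontier hC.isConvexBody hv)) hD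
      (lowerHeight_le hC.isConvexBody hv) (le_upperHeight hcomp hv) using 2
    ring
  obtain ⟨_, ⟨t, ⟨ht₁, ht₂⟩, rfl⟩, hfrontier⟩ :=
    exists_mem_frontier_of_isPreconnected (isPreconnected_Icc.image _ hpath) (C := C)
      ⟨_, ⟨D / 3, ⟨le_rfl, by linarith⟩, rfl⟩, hstart⟩
      ⟨_, ⟨3 * D / 4, ⟨by linarith, le_rfl⟩, rfl⟩, fun h ↦ by linarith [hmax _ _ h]⟩
  have ht : 0 < t := by linarith
  have htD : t < D := by linarith
  obtain ⟨y₁, y₂, hlt, h₁, h₂⟩ := hC.exists_lt_mem_mem hD ht.le htD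
  exact ⟨t, _, _, ht,
    ((lowerHeight_le hC.isConvexBody h₁).trans_lt hlt).trans_le (le_upperHeight hcomp h₂),
    upperHeight_mem_frontier hcomp h₁, lowerHeight_mem_frontier hC.isConvexBody h₁, hfrontier⟩

end IsSymmetricBody

/-! ### Inscribed affine regular hexagons -/

/-- The hexagons with vertices in `F` having two horizontal sides, from `a` to `a + (t, 0)` and
from `b` to `b + (t, 0)`, and a horizontal diagonal, halfway between those sides and twice as long,
starting at `c`. -/
structure IsChordHexagon (F : Set (ℝ × ℝ)) (t : ℝ) (a b c : ℝ × ℝ) : Prop where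
  pos : 0 < t
  lt : b.2 < a.2
  mid : c.2 = (a.2 + b.2) / 2
  top_left : a ∈ F
  top_right : a + (t, 0) ∈ F
  bot_left : b ∈ F
  bot_right : b + (t, 0) ∈ F
  mid_left : c ∈ F
  mid_right : c + (2 * t, 0) ∈ F

/-- The parameters `(t, a, b, c)` of the hexagons `IsChordHexagon F t a b c`. -/
def chordHexagons (F : Set (ℝ × ℝ)) : Set (ℝ × (ℝ × ℝ) × (ℝ × ℝ) × (ℝ × ℝ)) :=
  {q | IsChordHexagon F q.1 q.2.1 q.2.2.1 q.2.2.2}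

section ChordHexagon

variable {K : Set (ℝ × ℝ)} {t : ℝ} {a b c : ℝ × ℝ}

lemma mem_chordHexagons_iff {F : Set (ℝ × ℝ)} :
    (t, a, b, c) ∈ chordHexagons F ↔ IsChordHexagon F t a b c := Iff.rfl

/-- The left endpoints of the horizontal chords of `K` of signed length `t` at height `y`. -/
def chordStarts (K : Set (ℝ × ℝ)) (t y : ℝ) : Set (ℝ × ℝ) :=
  {p | p.2 = y ∧ p ∈ K ∧ p + (t, 0) ∈ K}

lemma convex_chordStarts (hK : Convex ℝ K) (t y : ℝ) : Convex ℝ (chordStarts K t y) :=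
  ((convex_singleton y).linear_preimage (LinearMap.snd ℝ ℝ ℝ)).inter <|
    hK.inter (hK.translate_preimage_left (t, 0))

lemma nonempty_chordStarts_iff {y : ℝ} :
    (chordStarts K t y).Nonempty ↔ (t, y) ∈ chordBody K := by
  constructor
  · rintro ⟨⟨x, y⟩, rfl, h, h'⟩
    exact ⟨x, h, by simpa using h'⟩
  · rintro ⟨x, h, h'⟩
    exact ⟨(x, y), rfl, h, by simpa using h'⟩

lemma mem_frontier_chordBody_iff (hK : IsConvexBody K) (ht : 0 < t) (h : a ∈ K)
    (h' : a + (t, 0) ∈ K) :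
    (t, a.2) ∈ frontier (chordBody K) ↔ a ∈ frontier K ∧ a + (t, 0) ∈ frontier K := by
  obtain ⟨x, y⟩ := a
  have hx : (x, y) + (t, (0 : ℝ)) = (x + t, y) := by simp
  rw [hx] at h' ⊢
  have hmem : (t, y) ∈ chordBody K := ⟨x, h, h'⟩
  rw [(isConvexBody_chordBody hK).2.1.isClosed.frontier_eq, hK.2.1.isClosed.frontier_eq]
  simp only [mem_sdiff, hmem, h, h', true_and, mem_interior_chordBody_iff hK ht h h', not_or]

lemma isChordHexagon_iff (hK : IsConvexBody K) :
    IsChordHexagon (frontier K) t a b c ↔ IsBalanced (chordBody K) t a.2 b.2 ∧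
      a ∈ chordStarts K t a.2 ∧ b ∈ chordStarts K t b.2 ∧
        c ∈ chordStarts K (2 * t) ((a.2 + b.2) / 2) := by
  have hsub := hK.2.1.isClosed.frontier_subset
  constructor
  · intro h
    have ha := hsub h.top_left
    have ha' := hsub h.top_right
    have hb := hsub h.bot_left
    have hb' := hsub h.bot_right
    have hc := hsub h.mid_left
    have hc' := hsub h.mid_right
    have ht2 : 0 < 2 * t := by linarith [h.pos]
    refine ⟨⟨h.pos, h.lt, ?_, ?_, ?_⟩, ⟨rfl, ha, ha'⟩, ⟨rfl, hb, hb'⟩, ⟨h.mid, hc, hc'⟩⟩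
    · exact (mem_frontier_chordBody_iff hK h.pos ha ha').2 ⟨h.top_left, h.top_right⟩
    · exact (mem_frontier_chordBody_iff hK h.pos hb hb').2 ⟨h.bot_left, h.bot_right⟩
    · rw [← h.mid]
      exact (mem_frontier_chordBody_iff hK ht2 hc hc').2 ⟨h.mid_left, h.mid_right⟩
  · rintro ⟨h, ⟨-, ha, ha'⟩, ⟨-, hb, hb'⟩, hmid, hc, hc'⟩
    have ht2 : 0 < 2 * t := by linarith [h.pos]
    obtain ⟨h₁, h₂⟩ := (mem_frontier_chordBody_iff hK h.pos ha ha').1 h.top_mem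
    obtain ⟨h₃, h₄⟩ := (mem_frontier_chordBody_iff hK h.pos hb hb').1 h.bot_mem
    obtain ⟨h₅, h₆⟩ := (mem_frontier_chordBody_iff hK ht2 hc hc').1 (by
      rw [hmid]
      exact h.mid_mem)
    exact ⟨h.pos, h.lt, hmid, h₁, h₂, h₃, h₄, h₅, h₆⟩

lemma isSymmetricBody_chordBody (hK : IsConvexBody K) : IsSymmetricBody (chordBody K) :=
  ⟨isConvexBody_chordBody hK, fun _ _ ↦ neg_mem_chordBody⟩

lemma chordHexagons_frontier_eq_prod (hK : IsConvexBody K) {y₁ y₂ : ℝ}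
    (h : IsBalanced (chordBody K) t y₁ y₂) :
    chordHexagons (frontier K) =
      {t} ×ˢ chordStarts K t y₁ ×ˢ chordStarts K t y₂ ×ˢ chordStarts K (2 * t) ((y₁ + y₂) / 2) := by
  ext ⟨t', a, b, c⟩
  simp only [mem_chordHexagons_iff, isChordHexagon_iff hK, mem_prod, mem_singleton_iff]
  constructor
  · rintro ⟨h', ha, hb, hc⟩
    obtain ⟨rfl, rfl, rfl⟩ := h.unique (isSymmetricBody_chordBody hK) h'
    exact ⟨rfl, ha, hb, hc⟩
  · rintro ⟨rfl, ha, hb, hc⟩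
    obtain ⟨rfl, -⟩ := id ha
    obtain ⟨rfl, -⟩ := id hb
    exact ⟨h, ha, hb, hc⟩

lemma nonempty_chordHexagons_frontier (hK : IsConvexBody K) :
    (chordHexagons (frontier K)).Nonempty := by
  obtain ⟨t, y₁, y₂, h⟩ := (isSymmetricBody_chordBody hK).exists_isBalanced
  have hsub := (isConvexBody_chordBody hK).2.1.isClosed.frontier_subset
  rw [chordHexagons_frontier_eq_prod hK h]
  exact (singleton_nonempty t).prod <| (nonempty_chordStarts_iff.2 (hsub h.top_mem)).prod <|
    (nonempty_chordStarts_iff.2 (hsub h.bot_mem)).prod <|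
      nonempty_chordStarts_iff.2 (hsub h.mid_mem)

lemma convex_chordHexagons_frontier (hK : IsConvexBody K) :
    Convex ℝ (chordHexagons (frontier K)) := by
  obtain ⟨t, y₁, y₂, h⟩ := (isSymmetricBody_chordBody hK).exists_isBalanced
  rw [chordHexagons_frontier_eq_prod hK h]
  exact (convex_singleton t).prod <| (convex_chordStarts hK.1 _ _).prod <|
    (convex_chordStarts hK.1 _ _).prod (convex_chordStarts hK.1 _ _)

lemma IsChordHexagon.le_of_closedBall_subset (hK : IsConvexBody K)
    (h : IsChordHexagon (frontier K) t a b c) {p : ℝ × ℝ} {r : ℝ} (hr : 0 ≤ r)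
    (hball : closedBall p r ⊆ K) : r ≤ 3 * t ∧ r ≤ a.2 - b.2 := by
  have hC := isSymmetricBody_chordBody hK
  obtain ⟨hbal, -⟩ := (isChordHexagon_iff hK).1 h
  have hmem {x y : ℝ} (hx : |x| ≤ r) (hy : |y| ≤ r) : (p.1 + x, p.2 + y) ∈ K :=
    hball (by simpa [Prod.dist_eq] using ⟨hx, hy⟩)
  have h0 : |(0 : ℝ)| ≤ r := by simpa
  have hr' : |r| ≤ r := (abs_of_nonneg hr).le
  have hr'' : |-r| ≤ r := by rwa [abs_neg]
  have ht := hbal.le_three_mul hC (sub_mem_chordBody (hmem h0 h0) (hmem hr' h0))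
  have hab := hbal.sub_le_two_mul hC (zero_mem_chordBody (hmem h0 hr''))
    (zero_mem_chordBody (hmem h0 hr'))
  constructor <;> linarith

end ChordHexagon

section Rotation

open Real

/-- The rotation of the plane by the angle `s`. -/
noncomputable def planeRotation (s : ℝ) : (ℝ × ℝ) ≃ₗ[ℝ] ℝ × ℝ :=
  planeLinearEquiv (cos s, sin s) (-sin s, cos s) <| by
    have := sin_sq_add_cos_sq s
    simp only
    nlinarith

lemma planeRotation_apply (s : ℝ) (p : ℝ × ℝ) :
    planeRotation s p = (p.1 * cos s - p.2 * sin s, p.1 * sin s + p.2 * cos s) := by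
  ext <;> simp [planeRotation, planeLinearEquiv_apply]
  ring

lemma continuous_planeRotation : Continuous fun q : ℝ × (ℝ × ℝ) ↦ planeRotation q.1 q.2 := by
  simp only [planeRotation_apply]
  fun_prop

lemma planeRotation_neg_apply_apply (s : ℝ) (p : ℝ × ℝ) :
    planeRotation (-s) (planeRotation s p) = p := by
  have := sin_sq_add_cos_sq s
  ext <;> simp only [planeRotation_apply, cos_neg, sin_neg]
  · linear_combination p.1 * this
  · linear_combination p.2 * this

lemma planeRotation_add_pi_neg (s : ℝ) (p : ℝ × ℝ) :
    planeRotation (s + π) (-p) = planeRotation s p := by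
  ext <;> simp [planeRotation_apply]

lemma norm_planeRotation_le (s : ℝ) (p : ℝ × ℝ) : ‖planeRotation s p‖ ≤ 2 * ‖p‖ := by
  have hunit : ‖(cos s, sin s)‖ ≤ 1 := norm_prod_le_iff.2 ⟨abs_cos_le_one s, abs_sin_le_one s⟩
  have hunit' : ‖(-sin s, cos s)‖ ≤ 1 :=
    norm_prod_le_iff.2 ⟨by simpa using abs_sin_le_one s, abs_cos_le_one s⟩
  calc ‖p.1 • (cos s, sin s) + p.2 • (-sin s, cos s)‖
      ≤ ‖p.1‖ * ‖(cos s, sin s)‖ + ‖p.2‖ * ‖(-sin s, cos s)‖ := by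
        simpa only [norm_smul] using norm_add_le (p.1 • (cos s, sin s)) (p.2 • (-sin s, cos s))
    _ ≤ ‖p‖ * 1 + ‖p‖ * 1 := by
        gcongr
        exacts [norm_fst_le p, norm_snd_le p]
    _ = 2 * ‖p‖ := by ring

lemma norm_le_two_mul_norm_planeRotation (s : ℝ) (p : ℝ × ℝ) : ‖p‖ ≤ 2 * ‖planeRotation s p‖ := by
  simpa only [planeRotation_neg_apply_apply] using norm_planeRotation_le (-s) (planeRotation s p)

lemma exists_closedBall_subset_preimage_planeRotation {B : Set (ℝ × ℝ)} {p : ℝ × ℝ} {r : ℝ}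
    (h : closedBall p (2 * r) ⊆ B) (s : ℝ) : ∃ q, closedBall q r ⊆ planeRotation s ⁻¹' B := by
  obtain ⟨q, rfl⟩ := (planeRotation s).surjective p
  refine ⟨q, fun z hz ↦ h ?_⟩
  rw [mem_closedBall, dist_eq_norm] at hz ⊢
  rw [← map_sub]
  linarith [norm_planeRotation_le s (z - q)]

variable {F : Set (ℝ × ℝ)} {s t : ℝ} {a b c : ℝ × ℝ}

lemma IsChordHexagon.rotate_pi (h : IsChordHexagon (planeRotation s ⁻¹' F) t a b c) :
    IsChordHexagon (planeRotation (s + π) ⁻¹' F) t (-(b + (t, 0))) (-(a + (t, 0)))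
      (-(c + (2 * t, 0))) := by
  have hmem {p : ℝ × ℝ} (hp : p ∈ planeRotation s ⁻¹' F) :
      -p ∈ planeRotation (s + π) ⁻¹' F := by
    rwa [mem_preimage, planeRotation_add_pi_neg]
  have hmem' {p q : ℝ × ℝ} (hp : p ∈ planeRotation s ⁻¹' F) :
      -(p + q) + q ∈ planeRotation (s + π) ⁻¹' F := by
    rw [neg_add, neg_add_cancel_right]
    exact hmem hp
  refine ⟨h.pos, by simpa using h.lt, ?_, hmem h.bot_right, hmem' h.bot_left, hmem h.top_right,
    hmem' h.top_left, hmem h.mid_right, hmem' h.mid_left⟩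
  simp [h.mid]
  ring

end Rotation

section RotatedHexagons

open Real

variable {B : Set (ℝ × ℝ)}

/-- The pairs of an angle `s ∈ [0, π]` and (the parameters of) a hexagon inscribed in `B` and having
the shape of `IsChordHexagon`, in coordinates rotated by `s`. -/
def rotatedChordHexagons (B : Set (ℝ × ℝ)) : Set (ℝ × ℝ × (ℝ × ℝ) × (ℝ × ℝ) × (ℝ × ℝ)) :=
  {q | q.1 ∈ Icc 0 π ∧ q.2 ∈ chordHexagons (planeRotation q.1 ⁻¹' frontier B)}

lemma frontier_preimage_planeRotation (s : ℝ) (B : Set (ℝ × ℝ)) :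
    frontier (planeRotation s ⁻¹' B) = planeRotation s ⁻¹' frontier B :=
  frontier_preimage_affineEquiv (planeRotation s).toAffineEquiv B

lemma IsConvexBody.preimage_planeRotation (hB : IsConvexBody B) (s : ℝ) :
    IsConvexBody (planeRotation s ⁻¹' B) :=
  hB.preimage (planeRotation s).toAffineEquiv

lemma exists_pos_le_of_mem_rotatedChordHexagons (hB : IsConvexBody B) :
    ∃ r > 0, ∀ s t a b c, (s, t, a, b, c) ∈ rotatedChordHexagons B →
      r ≤ 3 * t ∧ r ≤ a.2 - b.2 := by
  obtain ⟨p, hp⟩ := hB.2.2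
  obtain ⟨r, hr, hball⟩ := nhds_basis_closedBall.mem_iff.1 (mem_interior_iff_mem_nhds.1 hp)
  refine ⟨r / 2, by positivity, fun s t a b c ⟨_, hq⟩ ↦ ?_⟩
  rw [← mul_div_cancel₀ r two_ne_zero] at hball
  obtain ⟨q, hq'⟩ := exists_closedBall_subset_preimage_planeRotation hball s
  rw [← frontier_preimage_planeRotation] at hq
  exact hq.le_of_closedBall_subset (hB.preimage_planeRotation s) (by positivity) hq'

lemma isClosed_rotatedChordHexagons (hB : IsConvexBody B) : IsClosed (rotatedChordHexagons B) := by
  obtain ⟨r, hr, hle⟩ := exists_pos_le_of_mem_rotatedChordHexagons hB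
  have hvertex {φ : ℝ × ℝ × (ℝ × ℝ) × (ℝ × ℝ) × (ℝ × ℝ) → ℝ × ℝ} (hφ : Continuous φ) :
      IsClosed {q | φ q ∈ planeRotation q.1 ⁻¹' frontier B} :=
    isClosed_frontier.preimage (continuous_planeRotation.comp (continuous_fst.prodMk hφ))
  -- the strict inequalities in `IsChordHexagon` are replaced by uniform ones
  have heq : rotatedChordHexagons B = {q | q.1 ∈ Icc 0 π ∧ r ≤ 3 * q.2.1 ∧
      r ≤ q.2.2.1.2 - q.2.2.2.1.2 ∧ q.2.2.2.2.2 = (q.2.2.1.2 + q.2.2.2.1.2) / 2 ∧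
      q.2.2.1 ∈ planeRotation q.1 ⁻¹' frontier B ∧
      q.2.2.1 + (q.2.1, 0) ∈ planeRotation q.1 ⁻¹' frontier B ∧
      q.2.2.2.1 ∈ planeRotation q.1 ⁻¹' frontier B ∧
      q.2.2.2.1 + (q.2.1, 0) ∈ planeRotation q.1 ⁻¹' frontier B ∧
      q.2.2.2.2 ∈ planeRotation q.1 ⁻¹' frontier B ∧
      q.2.2.2.2 + (2 * q.2.1, 0) ∈ planeRotation q.1 ⁻¹' frontier B} := by
    ext ⟨s, t, a, b, c⟩
    constructor
    · intro hq
      obtain ⟨ht, hab⟩ := hle s t a b c hq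
      obtain ⟨hs, h⟩ := hq
      exact ⟨hs, ht, hab, h.mid, h.top_left, h.top_right, h.bot_left, h.bot_right, h.mid_left,
        h.mid_right⟩
    · rintro ⟨hs, ht : r ≤ 3 * t, hab : r ≤ a.2 - b.2, hmid, h₁, h₂, h₃, h₄, h₅, h₆⟩
      exact ⟨hs, by linarith, by linarith, hmid, h₁, h₂, h₃, h₄, h₅, h₆⟩
  rw [heq]
  exact (isClosed_Icc.preimage continuous_fst).and <|
    (isClosed_le (by fun_prop) (by fun_prop)).and <|
    (isClosed_le (by fun_prop) (by fun_prop)).and <|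
    (isClosed_eq (by fun_prop) (by fun_prop)).and <|
    (hvertex (by fun_prop)).and <| (hvertex (by fun_prop)).and <|
    (hvertex (by fun_prop)).and <| (hvertex (by fun_prop)).and <|
    (hvertex (by fun_prop)).and (hvertex (by fun_prop))

lemma isCompact_rotatedChordHexagons (hB : IsConvexBody B) :
    IsCompact (rotatedChordHexagons B) := by
  obtain ⟨M, hM⟩ := hB.2.1.isBounded.exists_norm_le
  refine ((isCompact_Icc (a := (0 : ℝ)) (b := π)).prod
    (isCompact_closedBall (0 : ℝ × (ℝ × ℝ) × (ℝ × ℝ) × (ℝ × ℝ)) (4 * M))).of_isClosed_subset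
    (isClosed_rotatedChordHexagons hB) ?_
  rintro ⟨s, t, a, b, c⟩ ⟨hs, h⟩
  have hnorm {p : ℝ × ℝ} (hp : planeRotation s p ∈ frontier B) : ‖p‖ ≤ 2 * M :=
    (norm_le_two_mul_norm_planeRotation s p).trans
      (by gcongr; exact hM _ (hB.2.1.isClosed.frontier_subset hp))
  have ha := hnorm h.top_left
  have hb := hnorm h.bot_left
  have hc := hnorm h.mid_left
  have ht : ‖t‖ ≤ 4 * M :=
    calc ‖t‖ ≤ ‖(t, (0 : ℝ))‖ := norm_fst_le (t, (0 : ℝ))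
      _ = ‖a + (t, 0) - a‖ := by rw [add_sub_cancel_left]
      _ ≤ ‖a + (t, 0)‖ + ‖a‖ := norm_sub_le _ _
      _ ≤ 4 * M := by linarith [hnorm h.top_right]
  have := norm_nonneg a
  refine ⟨hs, mem_closedBall_zero_iff.2 ?_⟩
  simp only [norm_prod_le_iff]
  exact ⟨ht, norm_prod_le_iff.1 (by linarith), norm_prod_le_iff.1 (by linarith),
    norm_prod_le_iff.1 (by linarith)⟩

lemma isPreconnected_rotatedChordHexagons (hB : IsConvexBody B) :
    IsPreconnected (rotatedChordHexagons B) := by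
  refine isPreconnected_of_isPreconnected_fibers (isCompact_rotatedChordHexagons hB)
    continuous_fst ?_ fun s ↦ ?_
  · convert isPreconnected_Icc (a := (0 : ℝ)) (b := π)
    refine Subset.antisymm (image_subset_iff.2 fun q hq ↦ hq.1) fun s hs ↦ ?_
    obtain ⟨h, hh⟩ := nonempty_chordHexagons_frontier (hB.preimage_planeRotation s)
    rw [frontier_preimage_planeRotation] at hh
    exact ⟨(s, h), ⟨hs, hh⟩, rfl⟩
  · have hconv := convex_chordHexagons_frontier (hB.preimage_planeRotation s)
    rw [frontier_preimage_planeRotation] at hconv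
    convert (((convex_singleton s).inter (convex_Icc 0 π)).prod hconv).isPreconnected using 1
    ext ⟨s', h⟩
    simp only [rotatedChordHexagons, mem_inter_iff, mem_ofPred_eq, mem_preimage, mem_prod,
      mem_singleton_iff]
    constructor
    · rintro ⟨⟨hs, hh⟩, rfl⟩
      exact ⟨⟨rfl, hs⟩, hh⟩
    · rintro ⟨⟨rfl, hs⟩, hh⟩
      exact ⟨⟨hs, hh⟩, rfl⟩

-- Rotating by `π` turns a hexagon into one with the opposite defect `a.1 + b.1 - (2 * c.1 + t)`.
lemma exists_isChordHexagon_add_eq (hB : IsConvexBody B) :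
    ∃ s t a b c, IsChordHexagon (planeRotation s ⁻¹' frontier B) t a b c ∧
      a.1 + b.1 = 2 * c.1 + t := by
  obtain ⟨⟨t, a, b, c⟩, h⟩ := nonempty_chordHexagons_frontier (hB.preimage_planeRotation 0)
  rw [frontier_preimage_planeRotation] at h
  have hπ := h.rotate_pi
  rw [zero_add] at hπ
  let δ : ℝ × ℝ × (ℝ × ℝ) × (ℝ × ℝ) × (ℝ × ℝ) → ℝ :=
    fun q ↦ q.2.2.1.1 + q.2.2.2.1.1 - (2 * q.2.2.2.2.1 + q.2.1)
  have hδ : Continuous δ := by fun_prop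
  have himage := ((isPreconnected_rotatedChordHexagons hB).image δ hδ.continuousOn).ordConnected
  have h₀ : (0, t, a, b, c) ∈ rotatedChordHexagons B := ⟨⟨le_rfl, pi_pos.le⟩, h⟩
  have h₁ : (π, t, -(b + (t, 0)), -(a + (t, 0)), -(c + (2 * t, 0))) ∈ rotatedChordHexagons B :=
    ⟨⟨pi_pos.le, le_rfl⟩, hπ⟩
  have hneg : δ (π, t, -(b + (t, 0)), -(a + (t, 0)), -(c + (2 * t, 0))) = -δ (0, t, a, b, c) := by
    simp only [δ, Prod.fst_neg, Prod.fst_add]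
    ring
  obtain ⟨⟨s, t, a, b, c⟩, ⟨-, h⟩, hzero⟩ :=
    himage.uIcc_subset (mem_image_of_mem δ h₀) (mem_image_of_mem δ h₁)
      (show (0 : ℝ) ∈ _ by
        rw [hneg, mem_uIcc]
        rcases le_total 0 (δ (0, t, a, b, c)) with h | h
        · exact .inr ⟨by linarith, h⟩
        · exact .inl ⟨h, by linarith⟩)
  exact ⟨s, t, a, b, c, h, sub_eq_zero.1 hzero⟩

end RotatedHexagons

/-- The vertices of an affine regular hexagon centered at the origin. -/
def hexVertices : Set (ℝ × ℝ) :=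
  {(1, 0), (0, 1), (-1, 1), (-1, 0), (0, -1), (1, -1)}

lemma IsChordHexagon.exists_hexVertices_subset {F : Set (ℝ × ℝ)} {t : ℝ} {a b c : ℝ × ℝ}
    (h : IsChordHexagon F t a b c) (hsum : a.1 + b.1 = 2 * c.1 + t) :
    ∃ T : ℝ × ℝ ≃ᵃ[ℝ] ℝ × ℝ, hexVertices ⊆ T ⁻¹' F := by
  have hmid := h.mid
  have hac : c.2 < a.2 := by linarith [h.lt]
  obtain ⟨T, hT⟩ := exists_affineEquiv_plane_apply (c + (t, 0)) (t, 0) (a - c)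
    (by simpa using ⟨h.pos.ne', sub_ne_zero.2 hac.ne'⟩)
  have hvertex {z p : ℝ × ℝ} (hp : p ∈ F) (h₁ : c.1 + t + (z.1 * t + z.2 * (a.1 - c.1)) = p.1)
      (h₂ : c.2 + z.2 * (a.2 - c.2) = p.2) : z ∈ T ⁻¹' F := by
    rw [mem_preimage, hT]
    convert hp
    ext <;> simp [h₁, h₂]
  refine ⟨T, ?_⟩
  rintro z (rfl | rfl | rfl | rfl | rfl | rfl)
  · exact hvertex h.mid_right (by simp; ring) (by simp)
  · exact hvertex h.top_right (by simp; ring) (by simp)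
  · exact hvertex h.top_left (by simp) (by simp)
  · exact hvertex h.mid_left (by simp) (by simp)
  · exact hvertex h.bot_left (by simp; linarith) (by simp; linarith)
  · exact hvertex h.bot_right (by simp; linarith) (by simp; linarith)

lemma IsConvexBody.exists_hexVertices_subset_frontier {B : Set (ℝ × ℝ)} (hB : IsConvexBody B) :
    ∃ T : ℝ × ℝ ≃ᵃ[ℝ] ℝ × ℝ, hexVertices ⊆ frontier (T ⁻¹' B) := by
  obtain ⟨s, t, a, b, c, h, hsum⟩ := exists_isChordHexagon_add_eq hB
  obtain ⟨T, hT⟩ := h.exists_hexVertices_subset hsum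
  refine ⟨T.trans (planeRotation s).toAffineEquiv, ?_⟩
  rwa [frontier_preimage_affineEquiv]

/-! ### Convex bodies in hexagonal coordinates -/

section HexagonalCoordinates

/-- The affine copy of `sevenGon` in which its six vertices other than `(0, 2/5)` become
`hexVertices`. -/
def hexHeptagon : Set (ℝ × ℝ) :=
  convexHull ℝ (insert (4 / 5, 4 / 5) hexVertices)

/-- The norm whose unit ball is the convex hull of `hexVertices`. -/
def hexNorm (z : ℝ × ℝ) : ℝ := max |z.1 + z.2| (max |z.1| |z.2|)

/-- The linear rotation of order six that permutes `hexVertices`. -/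
noncomputable def hexRot : (ℝ × ℝ) ≃ₗ[ℝ] ℝ × ℝ := planeLinearEquiv (0, 1) (-1, 1) (by norm_num)

lemma hexRot_apply (z : ℝ × ℝ) : hexRot z = (-z.2, z.1 + z.2) := by
  simp [hexRot, planeLinearEquiv_apply]

lemma exists_image_hexHeptagon_eq_sevenGon :
    ∃ Φ : ℝ × ℝ ≃ᵃ[ℝ] ℝ × ℝ, Φ '' hexHeptagon = sevenGon := by
  obtain ⟨Φ, hΦ⟩ := exists_affineEquiv_plane_apply (0, 2) (1, -1) (-1, -1) (by norm_num)
  refine ⟨Φ, ?_⟩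
  rw [hexHeptagon, hexVertices, sevenGon, ← Φ.coe_toAffineMap, AffineMap.image_convexHull]
  simp only [image_insert_eq, image_singleton, AffineEquiv.coe_toAffineMap, hΦ]
  norm_num
  congr 1
  ext z
  simp only [mem_insert_iff, mem_singleton_iff]
  tauto

lemma swap_image_hexVertices : Prod.swap '' hexVertices = hexVertices := by
  simp only [hexVertices, image_insert_eq, image_singleton, Prod.swap_prod_mk]
  ext z
  simp only [mem_insert_iff, mem_singleton_iff]
  tauto

lemma hexRot_image_hexVertices : hexRot '' hexVertices = hexVertices := by
  simp only [hexVertices, image_insert_eq, image_singleton, hexRot_apply]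
  norm_num
  ext z
  simp only [mem_insert_iff, mem_singleton_iff]
  tauto

lemma hexNorm_hexRot (z : ℝ × ℝ) : hexNorm (hexRot z) = hexNorm z := by
  have hsum : -z.2 + (z.1 + z.2) = z.1 := by ring
  simp only [hexRot_apply, hexNorm, hsum, abs_neg]
  rw [max_comm |z.2|, max_left_comm]

lemma hexNorm_swap (z : ℝ × ℝ) : hexNorm z.swap = hexNorm z := by
  rw [hexNorm, hexNorm, Prod.fst_swap, Prod.snd_swap, add_comm, max_comm |z.2|]

lemma hexRot_pow_image_hexVertices (k : ℕ) : ⇑(hexRot ^ k) '' hexVertices = hexVertices := by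
  induction k with
  | zero => simp
  | succ k ih =>
    calc ⇑(hexRot ^ (k + 1)) '' hexVertices
        = ⇑(hexRot ^ k) '' (hexRot '' hexVertices) := image_comp (hexRot ^ k) hexRot _
      _ = hexVertices := by rw [hexRot_image_hexVertices, ih]

lemma hexNorm_hexRot_pow (k : ℕ) (z : ℝ × ℝ) : hexNorm ((hexRot ^ k) z) = hexNorm z := by
  induction k generalizing z with
  | zero => simp
  | succ k ih => rw [pow_succ, LinearEquiv.mul_apply, ih, hexNorm_hexRot]

lemma exists_hexRot_pow_sum_eq_hexNorm (z : ℝ × ℝ) :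
    ∃ k : ℕ, ((hexRot ^ k) z).1 + ((hexRot ^ k) z).2 = hexNorm z := by
  have h_pow (k : ℕ) : (hexRot ^ (k + 1)) z = (-((hexRot ^ k) z).2,
      ((hexRot ^ k) z).1 + ((hexRot ^ k) z).2) := by
    rw [pow_succ', LinearEquiv.mul_apply, hexRot_apply]
  -- the coordinate sums along the orbit of `z` are `x + y, x, -y, -(x + y), -x, y`
  have h_cases : ∃ k ∈ Finset.range 6,
      ((hexRot ^ k) z).1 + ((hexRot ^ k) z).2 = hexNorm z := by
    simp only [Finset.range_add_one, Finset.range_zero, insert_empty_eq, Finset.mem_insert,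
      Finset.mem_singleton, exists_eq_or_imp, exists_eq_left, h_pow, pow_zero,
      LinearEquiv.coe_one, id]
    unfold hexNorm
    grind
  obtain ⟨k, -, hk⟩ := h_cases
  exact ⟨k, hk⟩

lemma exists_hex_symmetry (z : ℝ × ℝ) : ∃ L : (ℝ × ℝ) ≃ₗ[ℝ] ℝ × ℝ,
    L '' hexVertices = hexVertices ∧ (∀ w, hexNorm (L w) = hexNorm w) ∧
      (L z).1 + (L z).2 = hexNorm z := by
  obtain ⟨k, hk⟩ := exists_hexRot_pow_sum_eq_hexNorm z
  exact ⟨hexRot ^ k, hexRot_pow_image_hexVertices k, hexNorm_hexRot_pow k, hk⟩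

lemma swap_image_hexHeptagon : Prod.swap '' hexHeptagon = hexHeptagon := by
  have hcoe : ⇑(LinearEquiv.prodComm ℝ ℝ ℝ).toLinearMap = Prod.swap := rfl
  rw [hexHeptagon, ← hcoe, LinearMap.image_convexHull, hcoe, image_insert_eq, Prod.swap_prod_mk,
    swap_image_hexVertices]

lemma smul_add_smul_mem_hexHeptagon {u v : ℝ × ℝ} (hu : u ∈ insert (4 / 5, 4 / 5) hexVertices)
    (hv : v ∈ insert (4 / 5, 4 / 5) hexVertices) {a b : ℝ} (ha : 0 ≤ a) (hb : 0 ≤ b)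
    (hab : a + b ≤ 1) : a • u + b • v ∈ hexHeptagon := by
  have hconv : Convex ℝ hexHeptagon := convex_convexHull ℝ _
  have hvert : insert (4 / 5, 4 / 5) hexVertices ⊆ hexHeptagon := subset_convexHull ℝ _
  have h0 : (0 : ℝ × ℝ) ∈ hexHeptagon := by
    convert hconv.midpoint_mem (x := (1, 0)) (y := (-1, 0)) (hvert (by simp [hexVertices]))
      (hvert (by simp [hexVertices]))
    simp [midpoint_eq_smul_add, Prod.ext_iff]
  exact smul_add_smul_mem_of_zero_mem hconv h0 (hvert hu) (hvert hv) ha hb hab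

-- `(x, y)` lies in the triangle spanned by `0` and the two vertices bounding its sector.
lemma mem_hexHeptagon_of_le {x y : ℝ} (hyx : y ≤ x) (hx : x ≤ 1) (hy : -1 ≤ y)
    (hxy : -1 ≤ x + y) (hx4 : 4 * x + y ≤ 4) : (x, y) ∈ hexHeptagon := by
  have hapex : ((4 / 5, 4 / 5) : ℝ × ℝ) ∈ insert (4 / 5, 4 / 5) hexVertices := mem_insert _ _
  have h₁ : ((1, 0) : ℝ × ℝ) ∈ insert (4 / 5, 4 / 5) hexVertices := by simp [hexVertices]
  have h₂ : ((1, -1) : ℝ × ℝ) ∈ insert (4 / 5, 4 / 5) hexVertices := by simp [hexVertices]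
  have h₃ : ((0, -1) : ℝ × ℝ) ∈ insert (4 / 5, 4 / 5) hexVertices := by simp [hexVertices]
  have h₄ : ((-1, 0) : ℝ × ℝ) ∈ insert (4 / 5, 4 / 5) hexVertices := by simp [hexVertices]
  rcases le_total 0 y with hy₀ | hy₀
  · convert smul_add_smul_mem_hexHeptagon h₁ hapex (a := x - y) (b := 5 / 4 * y)
      (by linarith) (by linarith) (by linarith) using 1
    ext <;> simp <;> ring
  rcases le_total 0 (x + y) with hs₀ | hs₀
  · convert smul_add_smul_mem_hexHeptagon h₁ h₂ (a := x + y) (b := -y)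
      (by linarith) (by linarith) (by linarith) using 1
    ext <;> simp
  rcases le_total 0 x with hx₀ | hx₀
  · convert smul_add_smul_mem_hexHeptagon h₂ h₃ (a := x) (b := -(x + y))
      (by linarith) (by linarith) (by linarith) using 1
    ext <;> simp
  · convert smul_add_smul_mem_hexHeptagon h₃ h₄ (a := -y) (b := -x)
      (by linarith) (by linarith) (by linarith) using 1
    ext <;> simp

lemma mem_hexHeptagon {x y : ℝ} (hx : x ≤ 1) (hy : y ≤ 1) (hx' : -1 ≤ x) (hy' : -1 ≤ y)
    (hxy : -1 ≤ x + y) (hx4 : 4 * x + y ≤ 4) (hy4 : x + 4 * y ≤ 4) : (x, y) ∈ hexHeptagon := by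
  rcases le_total y x with hyx | hyx
  · exact mem_hexHeptagon_of_le hyx hx hy' hxy hx4
  · rw [← swap_image_hexHeptagon]
    exact ⟨(y, x), mem_hexHeptagon_of_le hyx hy hx' (by linarith) (by linarith), rfl⟩

end HexagonalCoordinates

/-- The convex body `K` has `hexVertices` on its boundary and `p` is one of its points of greatest
`hexNorm`, lying in the sector where that norm is the sum of the coordinates. -/
structure IsHexNormalized (K : Set (ℝ × ℝ)) (p : ℝ × ℝ) : Prop where
  isConvexBody : IsConvexBody K
  hexVertices_subset : hexVertices ⊆ frontier K
  mem : p ∈ K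
  hexNorm_le : ∀ z ∈ K, hexNorm z ≤ p.1 + p.2

namespace IsHexNormalized

variable {K : Set (ℝ × ℝ)} {p z : ℝ × ℝ}

lemma of_symmetry (hK : IsConvexBody K) (hhex : hexVertices ⊆ frontier K) (hz : z ∈ K)
    (L : (ℝ × ℝ) ≃ₗ[ℝ] ℝ × ℝ) (hL : L '' hexVertices = hexVertices)
    (hmax : ∀ w ∈ K, hexNorm (L w) ≤ (L z).1 + (L z).2) :
    IsHexNormalized (L.symm.toAffineEquiv ⁻¹' K) (L z) where
  isConvexBody := hK.preimage _
  hexVertices_subset := by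
    rw [frontier_preimage_affineEquiv, ← hL]
    rintro _ ⟨v, hv, rfl⟩
    simpa using hhex hv
  mem := by simpa using hz
  hexNorm_le w hw := by
    have := hmax _ hw
    rwa [LinearEquiv.coe_toAffineEquiv, L.apply_symm_apply] at this

variable (hK : IsHexNormalized K p)
include hK

lemma swap : IsHexNormalized (Prod.swap ⁻¹' K) p.swap :=
  of_symmetry hK.isConvexBody hK.hexVertices_subset hK.mem (LinearEquiv.prodComm ℝ ℝ ℝ)
    swap_image_hexVertices fun w hw ↦
      (hexNorm_swap w).trans_le ((hK.hexNorm_le w hw).trans_eq (add_comm _ _))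

lemma vertex_mem {v : ℝ × ℝ} (hv : v ∈ hexVertices) : v ∈ K :=
  hK.isConvexBody.2.1.isClosed.frontier_subset (hK.hexVertices_subset hv)

lemma zero_mem_interior : (0 : ℝ × ℝ) ∈ interior K :=
  mem_interior_of_chord hK.isConvexBody.1 hK.isConvexBody.2.2
    (hK.vertex_mem (v := (-1, 0)) (by simp [hexVertices]))
    (hK.vertex_mem (v := (1, 0)) (by simp [hexVertices])) (by simp) (by simp)
    (hK.vertex_mem (v := (0, -1)) (by simp [hexVertices]))
    (hK.vertex_mem (v := (0, 1)) (by simp [hexVertices])) (by simp) (by simp)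

lemma exists_support_of_add {u w : ℝ × ℝ} (hu : u ∈ hexVertices) (hw : w ∈ hexVertices)
    (huw : u + w ∈ hexVertices) :
    ∃ f : StrongDual ℝ (ℝ × ℝ), 0 ≤ f u ∧ 0 ≤ f w ∧ f u + f w = 1 ∧ ∀ z ∈ K, f z ≤ 1 :=
  exists_support_of_add_notMem_interior hK.isConvexBody.1 hK.zero_mem_interior
    (hK.vertex_mem hu) (hK.vertex_mem hw) (hK.hexVertices_subset huw).2

lemma exists_fst_add_mul_snd_le_one :
    ∃ a : ℝ, 0 ≤ a ∧ a ≤ 1 ∧ ∀ z ∈ K, z.1 + a * z.2 ≤ 1 := by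
  obtain ⟨f, hu, hw, huw, hf⟩ := hK.exists_support_of_add (u := (0, 1)) (w := (1, -1))
    (by simp [hexVertices]) (by simp [hexVertices]) (by simp [hexVertices])
  rw [strongDual_apply_prod f 1 (-1)] at hw huw
  refine ⟨f (0, 1), hu, by linarith, fun z hz ↦ ?_⟩
  have := hf z hz
  rw [strongDual_apply_prod f z.1 z.2] at this
  have hfst : f (1, 0) = 1 := by linarith
  rw [hfst] at this
  linarith

lemma exists_mul_fst_sub_mul_snd_le_one :
    ∃ a : ℝ, 0 ≤ a ∧ a ≤ 1 ∧ ∀ z ∈ K, a * z.1 - (1 - a) * z.2 ≤ 1 := by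
  obtain ⟨f, hu, hw, huw, hf⟩ := hK.exists_support_of_add (u := (1, 0)) (w := (0, -1))
    (by simp [hexVertices]) (by simp [hexVertices]) (by simp [hexVertices])
  rw [strongDual_apply_prod f 0 (-1)] at hw huw
  refine ⟨f (1, 0), hu, by linarith, fun z hz ↦ ?_⟩
  have := hf z hz
  rw [strongDual_apply_prod f z.1 z.2] at this
  have hsnd : f (0, 1) = -(1 - f (1, 0)) := by linarith
  rw [hsnd] at this
  linarith

lemma abs_le_sum (hz : z ∈ K) :
    |z.1 + z.2| ≤ p.1 + p.2 ∧ |z.1| ≤ p.1 + p.2 ∧ |z.2| ≤ p.1 + p.2 := by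
  simpa only [hexNorm, max_le_iff] using hK.hexNorm_le z hz

lemma one_le_sum : 1 ≤ p.1 + p.2 := by
  simpa using (hK.abs_le_sum (hK.vertex_mem (v := (1, 0)) (by simp [hexVertices]))).1

lemma fst_le_one : p.1 ≤ 1 := by
  obtain ⟨a, ha, -, hsupp⟩ := hK.exists_fst_add_mul_snd_le_one
  have hy : 0 ≤ p.2 := by linarith [le_of_abs_le (hK.abs_le_sum hK.mem).2.1]
  linarith [hsupp p hK.mem, mul_nonneg ha hy]

lemma snd_le_one : p.2 ≤ 1 := hK.swap.fst_le_one

lemma fst_add_sum_le (hz : z ∈ K) : z.1 + (p.1 + p.2) ≤ 3 := by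
  obtain ⟨a, ha₀, ha₁, ha⟩ := hK.exists_fst_add_mul_snd_le_one
  obtain ⟨b, hb₀, hb₁, hb⟩ := hK.exists_mul_fst_sub_mul_snd_le_one
  have hpx := hK.fst_le_one
  have hpy := hK.snd_le_one
  rcases le_or_gt z.1 1 with hx | hx
  · linarith
  have hy : -1 ≤ z.2 := by
    rcases hb₁.lt_or_eq with hb₁ | rfl
    · nlinarith [hb z hz]
    · linarith [hb z hz]
  have hslope : p.1 + p.2 ≤ 2 - a := by
    nlinarith [ha p hK.mem]
  have hzx : z.1 ≤ 1 + a := by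
    nlinarith [ha z hz]
  linarith

lemma snd_add_sum_le (hz : z ∈ K) : z.2 + (p.1 + p.2) ≤ 3 := by
  have := hK.swap.fst_add_sum_le (z := z.swap) (by simpa using hz)
  simpa only [Prod.fst_swap, Prod.snd_swap, add_comm p.2] using this

lemma fst_le_one_or_sum_le_one (hz : z ∈ K) : z.1 ≤ 1 ∨ z.1 + z.2 ≤ 1 := by
  obtain ⟨a, ha₀, ha₁, ha⟩ := hK.exists_fst_add_mul_snd_le_one
  have hxy := ha z hz
  by_contra! h
  have hy : z.2 < 0 := by
    by_contra! hy
    nlinarith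
  nlinarith

lemma mem_of_sector {D a b : ℝ} (hD : 0 < D) (ha : 0 < a) (hab : a * p.2 ≤ b * p.1)
    (hle : (1 - p.2) * a + p.1 * b ≤ D * p.1) : D⁻¹ • (a, b) ∈ K := by
  have hp : 0 < p.1 := by
    have := hK.one_le_sum
    have := hK.snd_le_one
    by_contra! hp
    nlinarith
  have hDp : 0 < D * p.1 := mul_pos hD hp
  convert smul_add_smul_mem_of_zero_mem hK.isConvexBody.1 (interior_subset hK.zero_mem_interior)
    hK.mem
    (hK.vertex_mem (v := (0, 1)) (by simp [hexVertices])) (a := a / (D * p.1))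
    (b := (b * p.1 - a * p.2) / (D * p.1)) (by positivity)
    (div_nonneg (sub_nonneg.2 hab) hDp.le) ?_ using 1
  · ext
    · simp
      field_simp
    · simp
      field_simp
      ring
  · rw [← add_div, div_le_one hDp]
    linarith

lemma exists_edge_coordinate : ∃ σ : ℝ, 0 ≤ σ ∧ σ ≤ 1 ∧
    p.1 = 1 - σ * (2 - (p.1 + p.2)) ∧ p.2 = 1 - (1 - σ) * (2 - (p.1 + p.2)) := by
  have hx := hK.fst_le_one
  have hy := hK.snd_le_one
  rcases eq_or_lt_of_le (show p.1 + p.2 ≤ 2 by linarith) with hs | hs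
  · exact ⟨0, le_rfl, zero_le_one, by linarith, by linarith⟩
  · have hpos : 0 < 2 - (p.1 + p.2) := by linarith
    have hcancel := div_mul_cancel₀ (1 - p.1) hpos.ne'
    refine ⟨(1 - p.1) / (2 - (p.1 + p.2)), div_nonneg (by linarith) hpos.le,
      (div_le_one hpos).2 (by linarith), by linarith, by linarith⟩

lemma shifted_apex_mem {σ D : ℝ} (hσ₀ : 0 ≤ σ) (hσ₁ : σ ≤ 1)
    (hx : p.1 = 1 - σ * (2 - (p.1 + p.2))) (hy : p.2 = 1 - (1 - σ) * (2 - (p.1 + p.2)))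
    (hD₁ : 1 ≤ D) (hD₂ : D < 9 / 5) (hD : 17 / 10 - 2 / 5 * (p.1 + p.2) ≤ D) :
    D⁻¹ • (4 / 5 - (D - 1) * σ, 4 / 5 - (D - 1) * (1 - σ)) ∈ K := by
  have hs := hK.one_le_sum
  set k := 2 - (p.1 + p.2)
  have hbound {τ : ℝ} (hτ₀ : 0 ≤ τ) (hτ₁ : τ ≤ 1) :
      4 / 5 * (1 + k - 2 * τ * k) - (D - 1) * (1 - τ) ≤ D * (1 - τ * k) := by
    have h₁ : 0 ≤ (1 - τ) * (2 * D - 1 - 4 / 5 * (1 + k)) :=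
      mul_nonneg (by linarith) (by linarith)
    have h₂ : 0 ≤ τ * ((D - 4 / 5) * (1 - k)) :=
      mul_nonneg hτ₀ (mul_nonneg (by linarith) (by linarith))
    linear_combination h₁ + h₂
  have hpos {τ : ℝ} (hτ₁ : τ ≤ 1) : 0 < 4 / 5 - (D - 1) * τ := by
    nlinarith
  have hD₀ : 0 < D := by linarith
  rcases le_total ((4 / 5 - (D - 1) * σ) * p.2) ((4 / 5 - (D - 1) * (1 - σ)) * p.1)
    with hsec | hsec
  · refine hK.mem_of_sector hD₀ (hpos hσ₁) hsec ?_
    rw [hx, hy]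
    linear_combination hbound hσ₀ hσ₁
  · have := hK.swap.mem_of_sector hD₀ (hpos (sub_le_self 1 hσ₀)) hsec (by
      rw [Prod.fst_swap, Prod.snd_swap, hx, hy]
      linear_combination hbound (sub_nonneg.2 hσ₁) (sub_le_self 1 hσ₀))
    simpa using this

lemma exists_vadd_smul_hexHeptagon_subset {D : ℝ} (hD₁ : 1 ≤ D) (hD₂ : D < 9 / 5)
    (hD : 17 / 10 - 2 / 5 * (p.1 + p.2) ≤ D) : ∃ e : ℝ × ℝ, e +ᵥ D⁻¹ • hexHeptagon ⊆ K := by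
  obtain ⟨σ, hσ₀, hσ₁, hx, hy⟩ := hK.exists_edge_coordinate
  have hconv := hK.isConvexBody.1
  have hD₀ : 0 < D := by linarith
  -- the shrunk copy is pushed away from the apex, towards a point of the opposite edge
  have hedge : -(σ, 1 - σ) ∈ K := by
    have := hconv (hK.vertex_mem (v := (-1, 0)) (by simp [hexVertices]))
      (hK.vertex_mem (v := (0, -1)) (by simp [hexVertices])) hσ₀ (sub_nonneg.2 hσ₁) (by ring)
    simpa using this
  refine ⟨(1 - D⁻¹) • -(σ, 1 - σ), ?_⟩
  rw [hexHeptagon, ← convexHull_smul, ← convexHull_vadd]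
  refine convexHull_min ?_ hconv
  rintro _ ⟨_, ⟨v, hv, rfl⟩, rfl⟩
  rcases hv with rfl | hv
  · convert hK.shifted_apex_mem hσ₀ hσ₁ hx hy hD₁ hD₂ hD using 1
    ext <;> simp <;> field_simp <;> ring
  · exact hconv hedge (hK.vertex_mem hv) (sub_nonneg.2 (inv_le_one_of_one_le₀ hD₁))
      (inv_pos.2 hD₀).le (sub_add_cancel _ _)

lemma subset_vadd_smul_hexHeptagon {X ν g : ℝ} (hX : ∀ z ∈ K, z.1 ≤ X ∧ z.2 ≤ X) (hg : g ≤ 0)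
    (hν : 0 < ν) (h₁ : X ≤ ν + g) (h₂ : p.1 + p.2 ≤ ν - g) (h₃ : p.1 + p.2 + 3 ≤ 4 * ν + 5 * g)
    (h₄ : 1 + 3 * X ≤ 4 * ν + 5 * g) : K ⊆ (g, g) +ᵥ ν • hexHeptagon := by
  rintro ⟨x, y⟩ hz
  obtain ⟨hsum, hxn, hyn⟩ := hK.abs_le_sum hz
  obtain ⟨hxX, hyX⟩ := hX _ hz
  have hx4 : 4 * x + y ≤ 4 * ν + 5 * g := by
    rcases hK.fst_le_one_or_sum_le_one hz with h | h
    · linarith [le_of_abs_le hsum]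
    · linarith
  have hy4 : x + 4 * y ≤ 4 * ν + 5 * g := by
    rcases hK.swap.fst_le_one_or_sum_le_one (z := (y, x)) hz with h | h
    · linarith [le_of_abs_le hsum]
    · linarith
  have hsum' := neg_le_of_abs_le hsum
  have hx' := neg_le_of_abs_le hxn
  have hy' := neg_le_of_abs_le hyn
  dsimp only at *
  refine ⟨ν • ((x - g) / ν, (y - g) / ν),
    smul_mem_smul_set (mem_hexHeptagon ?_ ?_ ?_ ?_ ?_ ?_ ?_), ?_⟩
  · rw [div_le_one hν]
    linarith
  · rw [div_le_one hν]
    linarith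
  · rw [le_div_iff₀ hν]
    linarith
  · rw [le_div_iff₀ hν]
    linarith
  · rw [← add_div, le_div_iff₀ hν]
    linarith
  · rw [← mul_div_assoc, ← add_div, div_le_iff₀ hν]
    linarith
  · rw [← mul_div_assoc, ← add_div, div_le_iff₀ hν]
    linarith
  · ext <;> simp <;> field_simp <;> ring

lemma banachMazurLE_of_bounds {D X g : ℝ} (hD₁ : 1 ≤ D) (hD₂ : D < 9 / 5)
    (hD : 17 / 10 - 2 / 5 * (p.1 + p.2) ≤ D) (hX : ∀ z ∈ K, z.1 ≤ X ∧ z.2 ≤ X) (hg : g ≤ 0)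
    (h₁ : (X - g) * D ≤ 5 / 3) (h₂ : (p.1 + p.2 + g) * D ≤ 5 / 3)
    (h₃ : (p.1 + p.2 + 3 - 5 * g) * D ≤ 20 / 3) (h₄ : (1 + 3 * X - 5 * g) * D ≤ 20 / 3) :
    BanachMazurLE hexHeptagon K (5 / 3) := by
  have hD₀ : 0 < D := by linarith
  obtain ⟨e, he⟩ := hK.exists_vadd_smul_hexHeptagon_subset hD₁ hD₂ hD
  have hdiv {t c : ℝ} (h : t * D ≤ c) : t ≤ c * D⁻¹ := (le_mul_inv_iff₀ hD₀).2 h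
  refine .of_vadd_smul_subset (inv_ne_zero hD₀.ne') (by norm_num) he
    (hK.subset_vadd_smul_hexHeptagon hX hg (by positivity) ?_ ?_ ?_ ?_)
  · linarith [hdiv h₁]
  · linarith [hdiv h₂]
  · linarith [hdiv h₃]
  · linarith [hdiv h₄]

lemma banachMazurLE : BanachMazurLE hexHeptagon K (5 / 3) := by
  have hs₁ := hK.one_le_sum
  have hs₂ : p.1 + p.2 ≤ 2 := by linarith [hK.fst_le_one, hK.snd_le_one]
  have hX₁ : ∀ z ∈ K, z.1 ≤ p.1 + p.2 ∧ z.2 ≤ p.1 + p.2 := fun z hz ↦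
    ⟨le_of_abs_le (hK.abs_le_sum hz).2.1, le_of_abs_le (hK.abs_le_sum hz).2.2⟩
  have hX₂ : ∀ z ∈ K, z.1 ≤ 3 - (p.1 + p.2) ∧ z.2 ≤ 3 - (p.1 + p.2) := fun z hz ↦
    ⟨by linarith [hK.fst_add_sum_le hz], by linarith [hK.snd_add_sum_le hz]⟩
  have hbounds₁ {D g : ℝ} := hK.banachMazurLE_of_bounds (D := D) (g := g) (hX := hX₁)
  have hbounds₂ {D g : ℝ} := hK.banachMazurLE_of_bounds (D := D) (g := g) (hX := hX₂)
  generalize p.1 + p.2 = s at *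
  rcases le_total s (3 / 2) with hs | hs
  · refine hbounds₁ (D := 17 / 10 - 2 / 5 * s) (g := 0) ?_ ?_ ?_ ?_ ?_ ?_ ?_ ?_ <;>
      nlinarith
  rcases le_total s (7 / 4) with hs' | hs'
  · refine hbounds₂ (D := 17 / 10 - 2 / 5 * s) (g := 3 / 2 - s) ?_ ?_ ?_ ?_ ?_ ?_ ?_ ?_ <;>
      nlinarith
  · refine hbounds₂ (D := 1) (g := -1 / 3) ?_ ?_ ?_ ?_ ?_ ?_ ?_ ?_ <;> linarith

end IsHexNormalized

lemma banachMazurLE_sevenGon_of_hexVertices_subset {K : Set (ℝ × ℝ)} (hK : IsConvexBody K)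
    (hhex : hexVertices ⊆ frontier K) : BanachMazurLE sevenGon K (5 / 3) := by
  have hcont : Continuous hexNorm := by unfold hexNorm; fun_prop
  obtain ⟨z, hz, hmax⟩ := hK.2.1.exists_isMaxOn (hK.2.2.mono interior_subset) hcont.continuousOn
  obtain ⟨L, hL, hnorm, hsum⟩ := exists_hex_symmetry z
  have hnormal := IsHexNormalized.of_symmetry hK hhex hz L hL fun w hw ↦ by
    rw [hnorm, hsum]
    exact hmax hw
  obtain ⟨Φ, hΦ⟩ := exists_image_hexHeptagon_eq_sevenGon
  exact hΦ ▸ hnormal.banachMazurLE.of_preimage_right.image_left Φ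

theorem stmt_1_general (B : Set (ℝ × ℝ)) (hB : IsConvexBody B) :
    BanachMazurLE sevenGon B (5 / 3) := by
  obtain ⟨T, hT⟩ := hB.exists_hexVertices_subset_frontier
  exact (banachMazurLE_sevenGon_of_hexVertices_subset (hB.preimage T) hT).of_preimage_right T

theorem stmt_1 (B : Set (ℝ × ℝ)) (hB : IsConvexBody B) :
    ∃ (T : ℝ × ℝ ≃ᵃ[ℝ] ℝ × ℝ) (c : ℝ × ℝ) (l : ℝ),
      1 ≤ l ∧ l ≤ 117 / 70 ∧
      T '' sevenGon ⊆ B ∧ B ⊆ AffineMap.homothety c l '' (T '' sevenGon) := by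
  obtain ⟨T, c, hsub, hsup⟩ := stmt_1_general B hB
  exact ⟨T, c, 5 / 3, by norm_num, by norm_num, hsub, hsup⟩
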